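/- (Pythagorean relation.) Let I be a finite set, let E = {p ∈ P_+(I) : p(x) = Q_r(x) exp(θᵀF(x))/Z(θ), θ ∈ ℝ^d} be the exponential family with sufficient statistic F: I → ℝ^d and reference measure Q_r ∈ P_+(I), and for P ∈ P(I) let N = {p ∈ P(I) : Σ_{x∈I} F(x)p(x) = Σ_{x∈I} F(x)P(x)} be the orthogonal linear family. If P* ∈ P(I) lies in both N and the closure of E, then for every Q ∈ E and every P ∈ N, D(P‖Q) = D(P‖P*) + D(P*‖Q), where D(p‖q) = Σ_{x∈I} p(x) log(p(x)/q(x)) is the KL divergence. -/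

import Mathlib

open Set

namespace StatRicci

noncomputable section

/-- Kullback–Leibler divergence `D(p‖q) = Σ_x p(x) log(p(x)/q(x))` on a finite set
(with the convention `0·log 0 = 0`, realized via `Real.log 0 = 0`). -/
def DKL {ι : Type*} [Fintype ι] (p q : ι → ℝ) : ℝ :=
  ∑ x, p x * Real.log (p x / q x)

/-- `p` is a probability distribution on `ι`: `p ∈ P(I)`. -/
def isProb {ι : Type*} [Fintype ι] (p : ι → ℝ) : Prop :=
  (∀ x, 0 ≤ p x) ∧ ∑ x, p x = 1

/-- `p` is a strictly positive probability distribution: `p ∈ P₊(I)`. -/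
def isPosProb {ι : Type*} [Fintype ι] (p : ι → ℝ) : Prop :=
  (∀ x, 0 < p x) ∧ ∑ x, p x = 1

/-- The exponential family `E = {p : p(x) = Q_r(x) exp(θᵀF(x))/Z(θ), θ ∈ ℝ^d}` with
sufficient statistic `F` and reference measure `Q_r`. -/
def expFam {ι : Type*} [Fintype ι] {d : ℕ} (Qr : ι → ℝ) (F : ι → Fin d → ℝ) :
    Set (ι → ℝ) :=
  {p | ∃ θ : Fin d → ℝ, ∀ x, p x = Qr x * Real.exp (∑ a, θ a * F x a)
    / ∑ y, Qr y * Real.exp (∑ a, θ a * F y a)}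

/-- The orthogonal linear family
`N = {p ∈ P(I) : Σ_x F(x) p(x) = Σ_x F(x) P(x)}` determined by a target `P`. -/
def linFam {ι : Type*} [Fintype ι] {d : ℕ} (F : ι → Fin d → ℝ) (P : ι → ℝ) :
    Set (ι → ℝ) :=
  {p | isProb p ∧ ∀ a, ∑ x, F x a * p x = ∑ x, F x a * P x}


lemma expFam_log {ι : Type*} [Fintype ι] {d : ℕ} {Qr : ι → ℝ} {F : ι → Fin d → ℝ}
    (hQr : isPosProb Qr) {p : ι → ℝ} (hp : p ∈ expFam Qr F) :
    (∀ x, 0 < p x) ∧ (∀ x, p x ≤ 1) ∧ ∃ (θ : Fin d → ℝ) (c : ℝ),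
      ∀ x, Real.log (p x) = Real.log (Qr x) + (∑ a, θ a * F x a) - c := by
  obtain ⟨θ, h⟩ := hp
  have hpos : ∀ x, 0 < Qr x * Real.exp (∑ a, θ a * F x a) :=
    fun x => mul_pos (hQr.1 x) (Real.exp_pos _)
  have hle : ∀ x, Qr x * Real.exp (∑ a, θ a * F x a)
      ≤ ∑ y, Qr y * Real.exp (∑ a, θ a * F y a) := fun x =>
    Finset.single_le_sum (f := fun y => Qr y * Real.exp (∑ a, θ a * F y a))
      (fun y _ => (hpos y).le) (Finset.mem_univ x)
  have hZ := fun x => (hpos x).trans_le (hle x)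
  refine ⟨fun x => ?_, fun x => ?_, θ,
    Real.log (∑ y, Qr y * Real.exp (∑ a, θ a * F y a)), fun x => ?_⟩
  · rw [h x]; exact div_pos (hpos x) (hZ x)
  · rw [h x]; exact (div_le_one (hZ x)).2 (hle x)
  · rw [h x, Real.log_div (hpos x).ne' (hZ x).ne',
      Real.log_mul (hQr.1 x).ne' (Real.exp_pos _).ne', Real.log_exp]

lemma linFam_sum {ι : Type*} [Fintype ι] {d : ℕ} {F : ι → Fin d → ℝ} {P0 P : ι → ℝ}
    (hP : P ∈ linFam F P0) (g : ι → ℝ) (θ : Fin d → ℝ) (c : ℝ) :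
    ∑ x, P x * (g x + (∑ a, θ a * F x a) - c)
      = ∑ x, P x * g x + ∑ a, θ a * (∑ x, F x a * P0 x) - c := by
  obtain ⟨⟨_, h1⟩, h2⟩ := hP
  have e : ∑ a, θ a * (∑ x, F x a * P0 x) = ∑ x, P x * ∑ a, θ a * F x a := by
    simp_rw [← h2, Finset.mul_sum]
    rw [Finset.sum_comm]
    exact Finset.sum_congr rfl fun x _ => Finset.sum_congr rfl fun a _ => by ring
  have e2 : c = ∑ x, P x * c := by rw [← Finset.sum_mul, h1, one_mul]
  rw [e]
  conv_rhs => rw [e2]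
  rw [← Finset.sum_add_distrib, ← Finset.sum_sub_distrib]
  exact Finset.sum_congr rfl fun x _ => by ring

/-- Orthogonality of the two families. -/
lemma orth {ι : Type*} [Fintype ι] {d : ℕ} {Qr : ι → ℝ} {F : ι → Fin d → ℝ}
    (hQr : isPosProb Qr) {P0 P P' p : ι → ℝ} (hp : p ∈ expFam Qr F)
    (hP : P ∈ linFam F P0) (hP' : P' ∈ linFam F P0) :
    ∑ x, P x * Real.log (p x) = ∑ x, P' x * Real.log (p x) +
      (∑ x, P x * Real.log (Qr x) - ∑ x, P' x * Real.log (Qr x)) := by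
  obtain ⟨_, _, θ, c, h⟩ := expFam_log hQr hp
  simp_rw [h]
  rw [linFam_sum hP, linFam_sum hP']
  ring

/-- **Pythagorean relation.** If `P*` lies in both the orthogonal linear
family `N` and the closure of the exponential family `E`, then for every `Q ∈ E` and
every `P ∈ N`: `D(P‖Q) = D(P‖P*) + D(P*‖Q)`. -/
theorem pythagorean_relation {ι : Type*} [Fintype ι] {d : ℕ}
    (F : ι → Fin d → ℝ) (Qr : ι → ℝ) (hQr : isPosProb Qr)
    (P0 : ι → ℝ) (hP0 : isProb P0)
    (Pstar : ι → ℝ)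
    (hstar : Pstar ∈ linFam F P0 ∩ closure (expFam Qr F)) :
    ∀ Q ∈ expFam Qr F, ∀ P ∈ linFam F P0,
      DKL P Q = DKL P Pstar + DKL Pstar Q := by
  intro Q hQ P hP
  obtain ⟨hS, hcl⟩ := hstar
  obtain ⟨u, hu, hlim⟩ := mem_closure_iff_seq_limit.1 hcl
  rw [tendsto_pi_nhds] at hlim
  have hS0 := hS.1.1
  have hPn := hP.1.1
  have ht : Filter.Tendsto (fun n => ∑ x, Pstar x * Real.log (u n x)) Filter.atTop
      (nhds (∑ x, Pstar x * Real.log (Pstar x))) := by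
    refine tendsto_finsetSum _ fun x _ => ?_
    by_cases hx : Pstar x = 0
    · simp [hx]
    · exact ((hlim x).log hx).const_mul _
  have ht2 : Filter.Tendsto (fun n => ∑ x, P x * Real.log (u n x)) Filter.atTop
      (nhds (∑ x, Pstar x * Real.log (Pstar x) +
      (∑ x, P x * Real.log (Qr x) - ∑ x, Pstar x * Real.log (Qr x)))) := by
    simp_rw [fun n => orth hQr (hu n) hP hS]
    exact ht.add_const _
  have hsupp : ∀ x, Pstar x = 0 → P x = 0 := by
    intro x hx
    by_contra hne
    have hpos : 0 < P x := lt_of_le_of_ne (hPn x) (Ne.symm hne)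
    have h0 : Filter.Tendsto (fun n => u n x) Filter.atTop (nhdsWithin 0 (Set.Ioi 0)) := by
      refine tendsto_nhdsWithin_iff.2 ⟨hx ▸ hlim x, Filter.Eventually.of_forall fun n => ?_⟩
      exact (expFam_log hQr (hu n)).1 x
    have h1 : Filter.Tendsto (fun n => P x * Real.log (u n x)) Filter.atTop Filter.atBot :=
      (Real.tendsto_log_nhdsGT_zero.comp h0).const_mul_atBot hpos
    have h2 : Filter.Tendsto (fun n => ∑ x, P x * Real.log (u n x)) Filter.atTop
        Filter.atBot := by
      refine Filter.tendsto_atBot_mono (fun n => ?_) h1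
      obtain ⟨ha, hb, _⟩ := expFam_log hQr (hu n)
      have := Finset.single_le_sum (f := fun y => -(P y * Real.log (u n y)))
        (fun y _ => neg_nonneg.2 (mul_nonpos_of_nonneg_of_nonpos (hPn y)
          (Real.log_nonpos (ha y).le (hb y)))) (Finset.mem_univ x)
      rw [Finset.sum_neg_distrib] at this
      exact neg_le_neg_iff.1 this
    exact not_tendsto_nhds_of_tendsto_atBot h2 _ ht2
  have ht3 : Filter.Tendsto (fun n => ∑ x, P x * Real.log (u n x)) Filter.atTop
      (nhds (∑ x, P x * Real.log (Pstar x))) := by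
    refine tendsto_finsetSum _ fun x _ => ?_
    by_cases hx : Pstar x = 0
    · simp [hsupp x hx]
    · exact ((hlim x).log hx).const_mul _
  have key := tendsto_nhds_unique ht3 ht2
  have keyQ := orth hQr hQ hP hS
  have hQpos := (expFam_log hQr hQ).1
  have split : ∀ p q : ι → ℝ, (∀ x, q x = 0 → p x = 0) →
      DKL p q = ∑ x, p x * Real.log (p x) - ∑ x, p x * Real.log (q x) := by
    intro p q hpq
    unfold DKL
    rw [← Finset.sum_sub_distrib]
    refine Finset.sum_congr rfl fun x _ => ?_
    by_cases hx : p x = 0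
    · simp [hx]
    · rw [Real.log_div hx (fun h => hx (hpq x h))]; ring
  rw [split P Q fun x h => absurd h (hQpos x).ne', split P Pstar hsupp,
    split Pstar Q fun x h => absurd h (hQpos x).ne']
  linarith

end
end StatRicci
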